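/- arXiv:0812.0730 — 2 statements merged into one kernel-verified Lean document; each statement's English description precedes it below -/
import Mathlib

section
/- Let α > -1, 0 < t ≤ 2, a ≠ 0, and n ≥ 1. Define R_n(x) = L_n^α(x) + a·L_n^{α+t}(x). If x and x' are consecutive zeros of L_n^α, then R_n(x)·R_n(x') < 0. -/
open Finset

/-- Generalized Laguerre polynomial `L_n^α(x) = ∑_{k=0}^n (-1)^k C(n+α, n-k) x^k / k!`,
where `C(n+α, n-k) = (∏_{i=1}^{n-k} (α+k+i)) / (n-k)!`. -/
noncomputable def laguerre (α : ℝ) (n : ℕ) (x : ℝ) : ℝ :=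
  ∑ k ∈ Finset.range (n + 1),
    (-1 : ℝ) ^ k * (∏ i ∈ Finset.range (n - k), (α + k + 1 + i)) /
      ((Nat.factorial (n - k) : ℝ) * (Nat.factorial k : ℝ)) * x ^ k

/-!
Write `c = L_n^{α+1}(x)` at a zero `x` of `L_{n+1}^α`. Since `c` is minus the derivative of
`L_{n+1}^α` there, it changes sign between consecutive zeros, so it suffices that
`c * L_{n+1}^{α+t}(x) > 0` for `0 < t ≤ 2`.

For `0 < t ≤ 1`, Chu–Vandermonde gives
`L_{n+1}^{s+t}(x) - L_{n+1}^s(x) = ∑_{j ≤ n} (t)_{j+1} / (j+1)! * L_{n-j}^s(x)`, and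
`(t)_j / j!` is the `j`-th moment of the Beta law with parameters `t` and `1 - t` (the point mass
at `1` when `t = 1`). The difference is therefore the mean of `r * G(r)`, where
`G(r) = ∑_{m ≤ n} L_m^s(x) r^(n-m)`. The recurrence of the Laguerre polynomials turns into a first
order differential equation for `G`, under which `c * G` can only cross zero downwards on `(0, 1)`
because `c * L_n^s(x)` and `c * L_n^{s+1}(x)` are positive; as `c * G(1) = c * L_n^{s+1}(x) > 0`,
it is positive throughout `(0, 1]`. This applies at `x` with `s = α` and with
`s = α + 1`, whence `0 = c L_{n+1}^α < c L_{n+1}^{α+1} < c L_{n+1}^{α+t}` when `1 < t ≤ 2`.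
-/

open Polynomial ProbabilityTheory

section RealAnalysis

lemma deriv_mul_deriv_nonpos_of_consecutive_zeros {f : ℝ → ℝ} {a b : ℝ} (hab : a < b)
    (hf : ContinuousOn f (Set.Icc a b)) (ha : f a = 0) (hb : f b = 0)
    (hne : ∀ u ∈ Set.Ioo a b, f u ≠ 0) : deriv f a * deriv f b ≤ 0 := by
  by_contra! hprod
  wlog ha' : 0 < deriv f a generalizing f
  · refine this hf.neg (by simp [ha]) (by simp [hb]) (fun u hu => neg_ne_zero.2 (hne u hu))
      (by simpa using hprod) ?_
    rw [deriv.neg, neg_pos]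
    exact (not_lt.1 ha').lt_of_ne (left_ne_zero_of_mul hprod.ne')
  have hb' : 0 < deriv f b := pos_of_mul_pos_right hprod ha'.le
  have hmid : a < (a + b) / 2 ∧ (a + b) / 2 < b := ⟨by linarith, by linarith⟩
  obtain ⟨u, hu, hau, hum⟩ := ((eventually_nhdsWithin_sign_eq_of_deriv_pos ha' ha).filter_mono
    nhdsWithin_le_nhds |>.and (Ioo_mem_nhdsGT hmid.1)).exists
  obtain ⟨v, hv, hmv, hvb⟩ := ((eventually_nhdsWithin_sign_eq_of_deriv_pos hb' hb).filter_mono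
    nhdsWithin_le_nhds |>.and (Ioo_mem_nhdsLT hmid.2)).exists
  have hfu : 0 < f u := sign_eq_one_iff.1 (hu.trans (sign_pos (sub_pos.2 hau)))
  have hfv : f v < 0 := sign_eq_neg_one_iff.1 (hv.trans (sign_neg (sub_neg.2 hvb)))
  obtain ⟨z, hz, hfz⟩ := intermediate_value_Icc' (hum.trans hmv).le
    (hf.mono (Set.Icc_subset_Icc hau.le hvb.le)) ⟨hfv.le, hfu.le⟩
  exact hne z ⟨hau.trans_le hz.1, hz.2.trans_lt hvb⟩ hfz

lemma pos_of_deriv_neg_of_eq_zero {f f' : ℝ → ℝ} {a b : ℝ}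
    (hf : ∀ r ∈ Set.Ioc a b, HasDerivAt f (f' r) r) (hb : 0 < f b)
    (hzero : ∀ r ∈ Set.Ioo a b, f r = 0 → f' r < 0) : ∀ r ∈ Set.Ioc a b, 0 < f r := by
  have hnonneg : ∀ r ∈ Set.Ioc a b, 0 ≤ f r := by
    intro r hr
    have hreflect : ∀ q ∈ Set.Icc (-b) (-r), HasDerivAt (fun q => -f (-q)) (f' (-q)) q := by
      intro q hq
      have hq' : -q ∈ Set.Ioc a b := ⟨hr.1.trans_le (le_neg.1 hq.2), neg_le.1 hq.1⟩
      simpa [Function.comp_def] using ((hf _ hq').scomp q (hasDerivAt_neg q)).fun_neg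
    have hle := image_le_of_deriv_right_lt_deriv_boundary (a := -b) (b := -r) (B := 0) (B' := 0)
      (HasDerivAt.continuousOn hreflect)
      (fun q hq => (hreflect q (Set.Ico_subset_Icc_self hq)).hasDerivWithinAt)
      (by simpa using hb.le) (fun q => hasDerivAt_const q 0) (fun q hq hq0 => ?_)
      (Set.right_mem_Icc.2 (neg_le_neg hr.2))
    · simpa using hle
    have hqb : -q ≠ b := by
      rintro rfl
      exact hb.ne' (by simpa using hq0)
    exact hzero (-q) ⟨by linarith [hr.1, hq.2], (neg_le.1 hq.1).lt_of_ne hqb⟩ (by simpa using hq0)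
  intro r hr
  refine (hnonneg r hr).lt_of_ne' fun hr0 => ?_
  have hrb : r ≠ b := by
    rintro rfl
    exact hb.ne' hr0
  have hr' : r ∈ Set.Ioo a b := ⟨hr.1, hr.2.lt_of_ne hrb⟩
  have hmin : IsLocalMin f r := by
    filter_upwards [Ioo_mem_nhds hr'.1 hr'.2] with u hu
    exact hr0.trans_le (hnonneg u ⟨hu.1, hu.2.le⟩)
  exact (hzero r hr' hr0).ne (hmin.hasDerivAt_eq_zero (hf r hr))

end RealAnalysis

section Multichoose

lemma multichoose_add {R : Type*} [CommRing R] [BinomialRing R] (r s : R) (k : ℕ) :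
    Ring.multichoose (r + s) k =
      ∑ p ∈ antidiagonal k, Ring.multichoose r p.1 * Ring.multichoose s p.2 := by
  have h := Ring.add_choose_eq k (Commute.all (-r) (-s))
  rw [← neg_add, Ring.choose_neg'] at h
  refine smul_left_cancel (Int.negOnePow k) (h.trans ?_)
  rw [Finset.smul_sum]
  refine sum_congr rfl fun p hp => ?_
  rw [← mem_antidiagonal.1 hp, Ring.choose_neg', Ring.choose_neg', smul_mul_smul_comm,
    Nat.cast_add, Int.negOnePow_add]

lemma succ_mul_multichoose_succ {R : Type*} [CommRing R] [BinomialRing R] (r : R) (k : ℕ) :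
    (k + 1) * Ring.multichoose r (k + 1) = (r + k) * Ring.multichoose r k := by
  have := BinomialRing.toIsAddTorsionFree (R := R)
  have h := Ring.factorial_nsmul_multichoose_eq_ascPochhammer r (k + 1)
  rw [ascPochhammer_succ_right, smeval_mul,
    ← Ring.factorial_nsmul_multichoose_eq_ascPochhammer] at h
  rw [← nsmul_right_inj (Nat.factorial_ne_zero k)]
  simp only [Nat.factorial_succ, nsmul_eq_mul, Nat.cast_mul, Nat.cast_add, Nat.cast_one,
    smeval_add, smeval_X, pow_one, smeval_natCast, pow_zero, mul_one] at h ⊢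
  linear_combination h

lemma multichoose_eq_prod_div_factorial {K : Type*} [Field K] [CharZero K] [BinomialRing K]
    (r : K) (k : ℕ) : Ring.multichoose r k = (∏ i ∈ range k, (r + i)) / k.factorial := by
  induction k with
  | zero => simp
  | succ k ih =>
    have hk : (k : K) + 1 ≠ 0 := by exact_mod_cast k.succ_ne_zero
    refine mul_left_cancel₀ hk ?_
    rw [succ_mul_multichoose_succ, ih, prod_range_succ, Nat.factorial_succ]
    push_cast
    field_simp

lemma multichoose_pos {K : Type*} [Field K] [LinearOrder K] [IsStrictOrderedRing K]
    [BinomialRing K] {r : K} (hr : 0 < r) (k : ℕ) : 0 < Ring.multichoose r k := by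
  rw [multichoose_eq_prod_div_factorial]
  positivity

end Multichoose

section BetaIntegral

lemma ofReal_rpow_mul_one_sub_rpow (a b : ℝ) {r : ℝ} (hr : r ∈ Set.Icc (0 : ℝ) 1) :
    ((r ^ (a - 1) * (1 - r) ^ (b - 1) : ℝ) : ℂ) =
      (r : ℂ) ^ ((a : ℂ) - 1) * (1 - (r : ℂ)) ^ ((b : ℂ) - 1) := by
  rw [Complex.ofReal_mul, Complex.ofReal_cpow hr.1, Complex.ofReal_cpow (sub_nonneg.2 hr.2)]
  push_cast
  rfl

variable {a b : ℝ}

lemma intervalIntegrable_rpow_mul_one_sub_rpow (ha : 0 < a) (hb : 0 < b) :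
    IntervalIntegrable (fun r : ℝ => r ^ (a - 1) * (1 - r) ^ (b - 1)) MeasureTheory.volume 0 1 := by
  have h := Complex.betaIntegral_convergent (u := a) (v := b) (by simpa) (by simpa)
  rw [intervalIntegrable_iff_integrableOn_Ioc_of_le zero_le_one] at h ⊢
  refine MeasureTheory.IntegrableOn.congr_fun h.re (fun r hr => ?_) measurableSet_Ioc
  simp only [← ofReal_rpow_mul_one_sub_rpow a b (Set.Ioc_subset_Icc_self hr)]
  exact Complex.ofReal_re _

lemma integral_rpow_mul_one_sub_rpow (ha : 0 < a) (hb : 0 < b) :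
    ∫ r : ℝ in 0..1, r ^ (a - 1) * (1 - r) ^ (b - 1) = beta a b := by
  rw [beta_eq_betaIntegralReal a b ha hb, Complex.betaIntegral,
    ← Complex.ofReal_re (∫ _ in _.._, _), ← intervalIntegral.integral_ofReal]
  congr 1
  refine intervalIntegral.integral_congr fun r hr => ?_
  rw [Set.uIcc_of_le zero_le_one] at hr
  exact ofReal_rpow_mul_one_sub_rpow a b hr

lemma add_mul_beta_add_one_left (ha : 0 < a) (hb : 0 < b) :
    (a + b) * beta (a + 1) b = a * beta a b := by
  have hΓ : Real.Gamma (a + b) ≠ 0 := (Real.Gamma_pos_of_pos (add_pos ha hb)).ne'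
  have hab : a + b ≠ 0 := (add_pos ha hb).ne'
  rw [beta, beta, add_right_comm, Real.Gamma_add_one ha.ne', Real.Gamma_add_one hab]
  field_simp

lemma beta_add_natCast_one_sub {t : ℝ} (ht0 : 0 < t) (ht1 : t < 1) (k : ℕ) :
    beta (t + k) (1 - t) = Ring.multichoose t k * beta t (1 - t) := by
  induction k with
  | zero => simp
  | succ k ih =>
    have hrec := add_mul_beta_add_one_left (a := t + k) (b := 1 - t) (by positivity) (by linarith)
    refine mul_left_cancel₀ (Nat.cast_add_one_ne_zero k : (k : ℝ) + 1 ≠ 0) ?_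
    rw [← mul_assoc, succ_mul_multichoose_succ, Nat.cast_succ, ← add_assoc]
    linear_combination hrec + (t + k) * ih

lemma sum_mul_multichoose_pos {ι : Type*} {S : Finset ι} {c : ι → ℝ} {e : ι → ℕ} {t : ℝ}
    (ht0 : 0 < t) (ht1 : t ≤ 1) (h : ∀ r ∈ Set.Ioc (0 : ℝ) 1, 0 < ∑ i ∈ S, c i * r ^ e i) :
    0 < ∑ i ∈ S, c i * Ring.multichoose t (e i) := by
  rcases ht1.eq_or_lt with rfl | ht1
  · simpa using h 1 (by simp)
  have h1t : 0 < 1 - t := sub_pos.2 ht1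
  have hint (i : ι) := (intervalIntegrable_rpow_mul_one_sub_rpow
    (a := t + e i) (b := 1 - t) (by positivity) h1t).const_mul (c i)
  have hpos : 0 < ∫ r : ℝ in 0..1,
      ∑ i ∈ S, c i * (r ^ (t + e i - 1) * (1 - r) ^ (1 - t - 1)) := by
    refine intervalIntegral.intervalIntegral_pos_of_pos_on
      (by simpa only [sum_fn] using IntervalIntegrable.sum S fun i _ => hint i)
      (fun r hr => ?_) zero_lt_one
    have hweight : 0 < r ^ (t - 1) * (1 - r) ^ (1 - t - 1) :=
      mul_pos (Real.rpow_pos_of_pos hr.1 _) (Real.rpow_pos_of_pos (sub_pos.2 hr.2) _)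
    refine (mul_pos hweight (h r ⟨hr.1, hr.2.le⟩)).trans_eq ?_
    rw [mul_sum]
    refine sum_congr rfl fun i _ => ?_
    rw [add_sub_right_comm, Real.rpow_add_natCast hr.1.ne']
    ring
  rw [intervalIntegral.integral_finsetSum fun i _ => hint i] at hpos
  simp only [intervalIntegral.integral_const_mul] at hpos
  refine pos_of_mul_pos_left (b := beta t (1 - t)) ?_ (beta_pos ht0 h1t).le
  refine hpos.trans_eq ?_
  rw [sum_mul]
  refine sum_congr rfl fun i _ => ?_
  rw [integral_rpow_mul_one_sub_rpow (by positivity) h1t, beta_add_natCast_one_sub ht0 ht1,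
    mul_assoc]

end BetaIntegral

section Laguerre

lemma laguerre_eq_sum_antidiagonal (s : ℝ) (n : ℕ) (x : ℝ) :
    laguerre s n x = ∑ p ∈ antidiagonal n,
      (-x) ^ p.1 / p.1.factorial * Ring.multichoose (s + p.1 + 1) p.2 := by
  rw [Finset.Nat.sum_antidiagonal_eq_sum_range_succ
    (fun k m => (-x) ^ k / k.factorial * Ring.multichoose (s + k + 1) m), laguerre]
  refine sum_congr rfl fun k _ => ?_
  rw [multichoose_eq_prod_div_factorial, neg_pow x k]
  field_simp

@[simp]
lemma laguerre_zero (s x : ℝ) : laguerre s 0 x = 1 := by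
  simp [laguerre]

lemma laguerre_pos_of_nonpos {s x : ℝ} (hs : -1 < s) (n : ℕ) (hx : x ≤ 0) :
    0 < laguerre s n x := by
  have hcoeff (p : ℕ × ℕ) : 0 < Ring.multichoose (s + p.1 + 1) p.2 :=
    multichoose_pos (by linarith [p.1.cast_nonneg (α := ℝ)]) _
  have hx' : 0 ≤ -x := neg_nonneg.2 hx
  rw [laguerre_eq_sum_antidiagonal]
  exact sum_pos' (fun p _ => by have := hcoeff p; positivity)
    ⟨(0, n), by simp, by simpa using hcoeff (0, n)⟩

lemma laguerre_add (s t : ℝ) (n : ℕ) (x : ℝ) :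
    laguerre (s + t) n x = ∑ p ∈ antidiagonal n, laguerre s p.2 x * Ring.multichoose t p.1 := by
  have hvandermonde (p : ℕ × ℕ) : Ring.multichoose (s + t + p.1 + 1) p.2 =
      ∑ q ∈ antidiagonal p.2, Ring.multichoose t q.1 * Ring.multichoose (s + p.1 + 1) q.2 := by
    rw [← multichoose_add]
    ring_nf
  simp only [laguerre_eq_sum_antidiagonal, hvandermonde, mul_sum, sum_mul, sum_sigma']
  refine sum_nbij' (fun ⟨⟨i, _⟩, ⟨k, l⟩⟩ => ⟨(k, i + l), (i, l)⟩)
    (fun ⟨⟨k, _⟩, ⟨i, l⟩⟩ => ⟨(i, k + l), (k, l)⟩) ?_ ?_ ?_ ?_ ?_ <;>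
    rintro ⟨⟨a, b⟩, ⟨c, d⟩⟩ h <;>
    simp only [mem_sigma, HasAntidiagonal.mem_antidiagonal] at h ⊢ <;> grind

lemma laguerre_succ_add_one (s : ℝ) (n : ℕ) (x : ℝ) :
    laguerre (s + 1) (n + 1) x = laguerre s (n + 1) x + laguerre (s + 1) n x := by
  simp only [laguerre_add s 1, Ring.multichoose_one, mul_one, Finset.Nat.sum_antidiagonal_succ]

lemma mul_laguerre_add_one (s : ℝ) (n : ℕ) (x : ℝ) :
    x * laguerre (s + 1) n x = (n + 1 + s) * laguerre s n x - (n + 1) * laguerre s (n + 1) x := by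
  have hdegree : (n + 1) * laguerre s (n + 1) x =
      ∑ p ∈ antidiagonal (n + 1), p.1 * ((-x) ^ p.1 / p.1.factorial) *
        Ring.multichoose (s + p.1 + 1) p.2 +
      ∑ p ∈ antidiagonal (n + 1), (-x) ^ p.1 / p.1.factorial *
        (p.2 * Ring.multichoose (s + p.1 + 1) p.2) := by
    rw [laguerre_eq_sum_antidiagonal, mul_sum, ← sum_add_distrib]
    refine sum_congr rfl fun p hp => ?_
    have hp' : (n : ℝ) + 1 = p.1 + p.2 := by exact_mod_cast (mem_antidiagonal.1 hp).symm
    rw [hp']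
    ring
  have hfst : ∑ p ∈ antidiagonal (n + 1), p.1 * ((-x) ^ p.1 / p.1.factorial) *
      Ring.multichoose (s + p.1 + 1) p.2 = -x * laguerre (s + 1) n x := by
    rw [laguerre_eq_sum_antidiagonal, Finset.Nat.sum_antidiagonal_succ, mul_sum]
    simp only [Nat.cast_zero, zero_mul, zero_add]
    refine sum_congr rfl fun p _ => ?_
    rw [Nat.factorial_succ, Nat.cast_mul, Nat.cast_succ, add_assoc s 1, add_comm (1 : ℝ)]
    field_simp
    ring
  have hsnd : ∑ p ∈ antidiagonal (n + 1), (-x) ^ p.1 / p.1.factorial *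
      (p.2 * Ring.multichoose (s + p.1 + 1) p.2) = (n + 1 + s) * laguerre s n x := by
    rw [laguerre_eq_sum_antidiagonal, Finset.Nat.sum_antidiagonal_succ', mul_sum]
    simp only [Nat.cast_zero, zero_mul, mul_zero, zero_add]
    refine sum_congr rfl fun p hp => ?_
    have hp' : (n : ℝ) = p.1 + p.2 := by exact_mod_cast (mem_antidiagonal.1 hp).symm
    rw [Nat.cast_succ, succ_mul_multichoose_succ, hp']
    ring
  linear_combination hdegree + hfst + hsnd

lemma laguerre_recurrence (s : ℝ) (n : ℕ) (x : ℝ) :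
    (n + 2) * laguerre s (n + 2) x =
      (2 * n + 3 + s - x) * laguerre s (n + 1) x - (n + 1 + s) * laguerre s n x := by
  have hsucc := mul_laguerre_add_one s (n + 1) x
  push_cast at hsucc
  linear_combination hsucc - mul_laguerre_add_one s n x - x * laguerre_succ_add_one s n x

lemma hasDerivAt_laguerre_succ (s : ℝ) (n : ℕ) (x : ℝ) :
    HasDerivAt (laguerre s (n + 1)) (-laguerre (s + 1) n x) x := by
  have hsum := HasDerivAt.fun_sum (u := antidiagonal (n + 1)) fun p _ =>
    (((hasDerivAt_neg x).fun_pow p.1).div_const (p.1.factorial : ℝ)).mul_const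
      (Ring.multichoose (s + p.1 + 1) p.2)
  simp only [← laguerre_eq_sum_antidiagonal] at hsum
  refine hsum.congr_deriv ?_
  rw [laguerre_eq_sum_antidiagonal, Finset.Nat.sum_antidiagonal_succ, ← sum_neg_distrib]
  simp only [Nat.cast_zero, zero_mul, zero_div, zero_add]
  refine sum_congr rfl fun p _ => ?_
  rw [Nat.factorial_succ, Nat.cast_mul, Nat.cast_succ, add_assoc s 1, add_comm (1 : ℝ),
    Nat.add_sub_cancel]
  field_simp

end Laguerre

section LaguerreGenPoly

/-- The reversed truncated generating function `∑_{m ≤ n} L_m^s(x) r^(n-m)` of the Laguerre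
polynomials, as a polynomial in `r`. -/
noncomputable def laguerreGenPoly (s x : ℝ) (n : ℕ) : ℝ[X] :=
  ∑ p ∈ antidiagonal n, C (laguerre s p.2 x) * X ^ p.1

lemma eval_laguerreGenPoly (s x : ℝ) (n : ℕ) (r : ℝ) :
    (laguerreGenPoly s x n).eval r = ∑ p ∈ antidiagonal n, laguerre s p.2 x * r ^ p.1 := by
  simp [laguerreGenPoly, eval_finsetSum]

lemma eval_one_laguerreGenPoly (s x : ℝ) (n : ℕ) :
    (laguerreGenPoly s x n).eval 1 = laguerre (s + 1) n x := by
  simp [eval_laguerreGenPoly, laguerre_add s 1]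

lemma laguerreGenPoly_succ (s x : ℝ) (n : ℕ) :
    laguerreGenPoly s x (n + 1) = X * laguerreGenPoly s x n + C (laguerre s (n + 1) x) := by
  simp only [laguerreGenPoly, Finset.Nat.sum_antidiagonal_succ, mul_sum, pow_zero, mul_one]
  rw [add_comm]
  congr 1
  refine sum_congr rfl fun p _ => ?_
  ring

lemma eval_derivative_laguerreGenPoly (s x : ℝ) (n : ℕ) (r : ℝ) :
    r * (1 - r) ^ 2 * (derivative (laguerreGenPoly s x n)).eval r =
      (n * (1 - r) ^ 2 + (s + 1) * (1 - r) + x * r) * (laguerreGenPoly s x n).eval r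
        - (n + 1 + s) * laguerre s n x + (n + 1) * laguerre s (n + 1) x * r := by
  induction n with
  | zero =>
    have hone := mul_laguerre_add_one s 0 x
    simp only [laguerre_zero, Nat.cast_zero, zero_add, mul_one, one_mul] at hone
    simp only [laguerreGenPoly, HasAntidiagonal.antidiagonal_zero, sum_singleton, laguerre_zero,
      map_one, pow_zero, mul_one, derivative_one, eval_zero, mul_zero, CharP.cast_eq_zero, zero_mul,
      zero_add, eval_one, one_mul]
    linear_combination -r * hone
  | succ n ih =>
    simp only [laguerreGenPoly_succ s x n, derivative_add, derivative_mul, derivative_X,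
      derivative_C, eval_add, eval_mul, eval_X, eval_C, one_mul, add_zero]
    push_cast
    linear_combination r * ih - r * laguerre_recurrence s n x

lemma mul_eval_laguerreGenPoly_pos {s x c : ℝ} {n : ℕ} (hs : -1 < s) (hx : 0 < x)
    (h0 : 0 ≤ c * laguerre s n x) (h1 : 0 < c * laguerre (s + 1) n x) :
    ∀ r ∈ Set.Ioc 0 1, 0 < c * (laguerreGenPoly s x n).eval r := by
  refine pos_of_deriv_neg_of_eq_zero
    (fun r _ => ((laguerreGenPoly s x n).hasDerivAt r).const_mul c)
    (by rwa [eval_one_laguerreGenPoly]) fun r hr hzero => ?_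
  have hr1 : 0 < 1 - r := sub_pos.2 hr.2
  have hcross : r * (1 - r) ^ 2 * (c * (derivative (laguerreGenPoly s x n)).eval r) =
      -((1 - r) * (n + 1 + s) * (c * laguerre s n x) + r * x * (c * laguerre (s + 1) n x)) := by
    linear_combination c * eval_derivative_laguerreGenPoly s x n r
      + (n * (1 - r) ^ 2 + (s + 1) * (1 - r) + x * r) * hzero
      + r * c * mul_laguerre_add_one s n x
  have hns : 0 < n + 1 + s := by linarith [n.cast_nonneg (α := ℝ)]
  refine neg_of_mul_neg_right (hcross.trans_lt (neg_neg_of_pos ?_)) (a := r * (1 - r) ^ 2) ?_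
  · have := hr.1
    positivity
  · exact (mul_pos hr.1 (by positivity)).le

lemma mul_laguerre_succ_lt_mul_laguerre_add {s t x c : ℝ} {n : ℕ} (ht0 : 0 < t) (ht1 : t ≤ 1)
    (hG : ∀ r ∈ Set.Ioc 0 1, 0 < c * (laguerreGenPoly s x n).eval r) :
    c * laguerre s (n + 1) x < c * laguerre (s + t) (n + 1) x := by
  have hmoments := sum_mul_multichoose_pos (S := antidiagonal n)
    (c := fun p => c * laguerre s p.2 x) (e := fun p => p.1 + 1) ht0 ht1 fun r hr => by
      refine (mul_pos hr.1 (hG r hr)).trans_eq ?_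
      simp only [eval_laguerreGenPoly, mul_sum]
      refine sum_congr rfl fun p _ => ?_
      ring
  simp only [mul_assoc, ← mul_sum] at hmoments
  rw [laguerre_add s t, Finset.Nat.sum_antidiagonal_succ, Ring.multichoose_zero_right, mul_one,
    mul_add]
  exact lt_add_of_pos_right _ hmoments

end LaguerreGenPoly

section Zeros

variable {α x : ℝ} {n : ℕ}

lemma pos_of_laguerre_eq_zero (hα : -1 < α) (hx : laguerre α n x = 0) : 0 < x := by
  by_contra! h
  exact (laguerre_pos_of_nonpos hα n h).ne' hx

lemma laguerre_ne_zero_of_succ_eq_zero (hα : -1 < α) (hx : laguerre α (n + 1) x = 0) :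
    laguerre α n x ≠ 0 := by
  induction n with
  | zero => simp
  | succ n ih =>
    intro hsucc
    have hprod : (n + 1 + α) * laguerre α n x = 0 := by
      linear_combination (2 * n + 3 + α - x) * hsucc - (n + 2) * hx + laguerre_recurrence α n x
    have hn : 0 < n + 1 + α := by linarith [n.cast_nonneg (α := ℝ)]
    exact ih hsucc ((mul_eq_zero.1 hprod).resolve_left hn.ne')

lemma laguerre_add_one_ne_zero_of_succ_eq_zero (hα : -1 < α) (hx : laguerre α (n + 1) x = 0) :
    laguerre (α + 1) n x ≠ 0 := by
  intro hzero
  have hprod : (n + 1 + α) * laguerre α n x = 0 := by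
    linear_combination x * hzero - mul_laguerre_add_one α n x + (n + 1) * hx
  have hn : 0 < n + 1 + α := by linarith [n.cast_nonneg (α := ℝ)]
  exact laguerre_ne_zero_of_succ_eq_zero hα hx ((mul_eq_zero.1 hprod).resolve_left hn.ne')

lemma laguerre_add_one_mul_laguerre_pos (hα : -1 < α) (hx : laguerre α (n + 1) x = 0) :
    0 < laguerre (α + 1) n x * laguerre α n x := by
  have hsq : (n + 1 + α) * (laguerre (α + 1) n x * laguerre α n x) =
      x * laguerre (α + 1) n x ^ 2 := by
    linear_combination -laguerre (α + 1) n x * mul_laguerre_add_one α n x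
      + (n + 1) * laguerre (α + 1) n x * hx
  have hn : 0 < n + 1 + α := by linarith [n.cast_nonneg (α := ℝ)]
  refine pos_of_mul_pos_right (hsq.symm ▸ ?_) hn.le
  have := pos_of_laguerre_eq_zero hα hx
  have := laguerre_add_one_ne_zero_of_succ_eq_zero hα hx
  positivity

lemma laguerre_add_one_mul_laguerre_add_two_pos (hα : -1 < α) (hx : laguerre α (n + 1) x = 0) :
    0 < laguerre (α + 1) n x * laguerre (α + 1 + 1) n x := by
  have hsq : x * (laguerre (α + 1) n x * laguerre (α + 1 + 1) n x) =
      (α + 1) * laguerre (α + 1) n x ^ 2 := by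
    linear_combination laguerre (α + 1) n x * mul_laguerre_add_one (α + 1) n x
      - (n + 1) * laguerre (α + 1) n x * (laguerre_succ_add_one α n x + hx)
  refine pos_of_mul_pos_right (hsq.symm ▸ ?_) (pos_of_laguerre_eq_zero hα hx).le
  have : 0 < α + 1 := by linarith
  have := laguerre_add_one_ne_zero_of_succ_eq_zero hα hx
  positivity

lemma laguerre_add_one_mul_laguerre_add_pos {t : ℝ} (hα : -1 < α) (ht0 : 0 < t) (ht2 : t ≤ 2)
    (hx : laguerre α (n + 1) x = 0) :
    0 < laguerre (α + 1) n x * laguerre (α + t) (n + 1) x := by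
  have hx0 := pos_of_laguerre_eq_zero hα hx
  have hc := laguerre_add_one_ne_zero_of_succ_eq_zero hα hx
  have hstep {u : ℝ} (hu0 : 0 < u) (hu1 : u ≤ 1) :
      0 < laguerre (α + 1) n x * laguerre (α + u) (n + 1) x := by
    simpa [hx] using mul_laguerre_succ_lt_mul_laguerre_add hu0 hu1
      (mul_eval_laguerreGenPoly_pos hα hx0 (laguerre_add_one_mul_laguerre_pos hα hx).le
        (mul_self_pos.2 hc))
  rcases le_or_gt t 1 with ht1 | ht1
  · exact hstep ht0 ht1
  have hsecond := mul_laguerre_succ_lt_mul_laguerre_add (sub_pos.2 ht1) (by linarith)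
    (mul_eval_laguerreGenPoly_pos (by linarith) hx0 (mul_self_nonneg _)
      (laguerre_add_one_mul_laguerre_add_two_pos hα hx))
  rw [add_add_sub_cancel] at hsecond
  exact (hstep one_pos le_rfl).trans hsecond

lemma laguerre_add_one_mul_neg_of_consecutive_zeros {y : ℝ} (hα : -1 < α) (hxy : x < y)
    (hx : laguerre α (n + 1) x = 0) (hy : laguerre α (n + 1) y = 0)
    (hne : ∀ u ∈ Set.Ioo x y, laguerre α (n + 1) u ≠ 0) :
    laguerre (α + 1) n x * laguerre (α + 1) n y < 0 := by
  have hderiv := hasDerivAt_laguerre_succ α n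
  have hle := deriv_mul_deriv_nonpos_of_consecutive_zeros hxy
    (HasDerivAt.continuousOn fun u _ => hderiv u) hx hy hne
  rw [(hderiv x).deriv, (hderiv y).deriv, neg_mul_neg] at hle
  exact hle.lt_of_ne (mul_ne_zero (laguerre_add_one_ne_zero_of_succ_eq_zero hα hx)
    (laguerre_add_one_ne_zero_of_succ_eq_zero hα hy))

end Zeros

theorem R_sign_change_at_consecutive_zeros (α t a : ℝ) (hα : α > -1) (ht0 : 0 < t)
    (ht2 : t ≤ 2) (ha : a ≠ 0) (n : ℕ) (hn : 1 ≤ n)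
    (R : ℝ → ℝ) (hR : ∀ x, R x = laguerre α n x + a * laguerre (α + t) n x)
    (x x' : ℝ) (hlt : x < x') (hx : laguerre α n x = 0) (hx' : laguerre α n x' = 0)
    (hcons : ∀ u ∈ Set.Ioo x x', laguerre α n u ≠ 0) :
    R x * R x' < 0 := by
  obtain ⟨m, rfl⟩ := Nat.exists_eq_add_of_le' hn
  have hsame := mul_pos (laguerre_add_one_mul_laguerre_add_pos hα ht0 ht2 hx)
    (laguerre_add_one_mul_laguerre_add_pos hα ht0 ht2 hx')
  rw [mul_mul_mul_comm] at hsame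
  have hopposite : laguerre (α + t) (m + 1) x * laguerre (α + t) (m + 1) x' < 0 :=
    neg_of_mul_pos_right hsame
      (laguerre_add_one_mul_neg_of_consecutive_zeros hα hlt hx hx' hcons).le
  rw [hR, hR, hx, hx', zero_add, zero_add, mul_mul_mul_comm]
  exact mul_neg_of_pos_of_neg (mul_self_pos.2 ha) hopposite
end

section
/- Let α > -1, 0 < t < 2, and n ≥ 2. Write 0 < x_1 < ... < x_n for the zeros of L_n^α, 0 < y_1 < ... < y_{n-1} for the zeros of L_{n-1}^α, 0 < t_1 < ... < t_{n-1} for the zeros of L_{n-1}^{α+t}, and 0 < X_1 < ... < X_{n-1} for the zeros of L_{n-1}^{α+2}. Then x_k < y_k < t_k < X_k < x_{k+1} for every k = 1, ..., n-1. -/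
open Finset

/-!
The differential equation of `L_n^α` turns into Stieltjes' electrostatic description of its zeros:
points on `(0, ∞)` repelling each other logarithmically are in equilibrium with a charge `α + 1` at
the origin. A maximum principle for the ratios `a k / b k` shows that a configuration `a` held by
smaller charges lies to the left of a configuration `b` held by larger ones. Once the largest zero
of `L_n^α` is removed, each remaining zero is held by a charge below `α + 1`; once the smallest one
is removed, by a charge above `α + 3`. So each of the four inequalities compares two configurations
of `n - 1` points.
-/

section Nodal

open Polynomial Lagrange

variable {ι K : Type*} [Field K] {s : Finset ι} {v : ι → K}

theorem nodal_dvd_of_eval_eq_zero (hv : Set.InjOn v s) {p : K[X]}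
    (hp : ∀ i ∈ s, p.eval (v i) = 0) : nodal s v ∣ p :=
  Finset.prod_dvd_of_coprime
    (fun _ hi _ hj hij => isCoprime_X_sub_C_of_isUnit_sub
      (sub_ne_zero.2 (hv.ne hi hj hij)).isUnit)
    fun i hi => dvd_iff_isRoot.2 (hp i hi)

theorem eval_derivative_nodal_of_forall_ne {x : K} (hx : ∀ i ∈ s, x ≠ v i) :
    (derivative (nodal s v)).eval x = (∑ i ∈ s, 1 / (x - v i)) * (nodal s v).eval x := by
  classical
  rw [derivative_nodal, eval_finsetSum, sum_mul]
  refine sum_congr rfl fun i hi => ?_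
  have hxi : x - v i ≠ 0 := sub_ne_zero.2 (hx i hi)
  rw [nodal_eq_mul_nodal_erase hi, eval_mul, eval_sub, eval_X, eval_C]
  field_simp

end Nodal

/-- The charge at the origin that keeps the point `v k` in equilibrium with the points `v j`,
`j ∈ s`: the solution `A` of `∑ 2 / (v k - v j) + A / v k = 1`, the sum being over the `j ≠ k`.
The equation is multiplied by `v k`, so that the sum depends only on the ratios of the points. -/
def originCharge {ι K : Type*} [Field K] [DecidableEq ι] (s : Finset ι) (v : ι → K) (k : ι) : K :=
  v k - ∑ j ∈ s.erase k, 2 * v k / (v k - v j)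

section Field

variable {ι κ K : Type*} [Field K] [DecidableEq ι] [DecidableEq κ] {s : Finset ι} {v : ι → K}
  {k p : ι}

theorem originCharge_erase (hp : p ∈ s) (hkp : p ≠ k) :
    originCharge (s.erase p) v k = originCharge s v k + 2 * v k / (v k - v p) := by
  rw [originCharge, originCharge, erase_right_comm,
    ← add_sum_erase (s.erase k) _ (mem_erase.2 ⟨hkp, hp⟩)]
  ring

theorem originCharge_map (s : Finset κ) (f : κ ↪ ι) (v : ι → K) (k : κ) :
    originCharge (s.map f) v (f k) = originCharge s (v ∘ f) k := by
  simp [originCharge, ← map_erase]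

open Polynomial Lagrange in
/-- At a simple zero `z` of `P` the equation reads `z * P'' z = (z - c) * P' z`, where
`P'' z / P' z` is the sum of `2 / (z - w)` over the other zeros `w`. -/
theorem originCharge_eq_of_kummer_equation {P : K[X]} {a c : K}
    (hode : X * derivative (derivative P) + (C c - X) * derivative P = C a * P)
    (hP : P ≠ 0) (hdeg : P.natDegree ≤ #s) (hv : Set.InjOn v s)
    (hzero : ∀ i ∈ s, P.eval (v i) = 0) (hk : k ∈ s) : originCharge s v k = c := by
  set Q := nodal (s.erase k) v
  have hne : ∀ j ∈ s.erase k, v k ≠ v j := fun j hj =>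
    hv.ne hk (mem_of_mem_erase hj) (ne_of_mem_erase hj).symm
  have hfactor : P = C P.leadingCoeff * ((X - C (v k)) * Q) := by
    rw [← nodal_eq_mul_nodal_erase hk]
    exact eq_leadingCoeff_mul_of_monic_of_dvd_of_natDegree_le nodal_monic
      (nodal_dvd_of_eval_eq_zero hv hzero) (by rwa [natDegree_nodal])
  have hQ : P.leadingCoeff * Q.eval (v k) ≠ 0 :=
    mul_ne_zero (leadingCoeff_ne_zero.2 hP) (eval_nodal_not_at_node hne)
  have hQ' : (derivative Q).eval (v k) = (∑ j ∈ s.erase k, 1 / (v k - v j)) * Q.eval (v k) :=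
    eval_derivative_nodal_of_forall_ne hne
  have heval := congrArg (Polynomial.eval (v k)) hode
  rw [hfactor] at heval
  simp only [derivative_mul, derivative_C, derivative_sub, derivative_X, derivative_add,
    derivative_zero, derivative_one, eval_add, eval_mul, eval_sub, eval_X, eval_C, eval_zero,
    eval_one, hQ'] at heval
  have hsum : ∑ j ∈ s.erase k, 2 * v k / (v k - v j) =
      2 * v k * ∑ j ∈ s.erase k, 1 / (v k - v j) := by
    simp only [mul_sum, mul_one_div]
  rw [originCharge, hsum]
  refine mul_left_cancel₀ hQ ?_
  linear_combination -heval

end Field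

section LinearOrderedField

variable {ι K : Type*} [Field K] [LinearOrder K] [IsStrictOrderedRing K]

theorem originCharge_erase_lt [DecidableEq ι] {s : Finset ι} {v : ι → K} {k p : ι} (hp : p ∈ s)
    (hk : 0 < v k) (hkp : v k < v p) : originCharge (s.erase p) v k < originCharge s v k := by
  rw [originCharge_erase hp (ne_of_apply_ne v hkp.ne')]
  exact add_lt_of_neg_right _ (div_neg_of_pos_of_neg (by positivity) (sub_neg.2 hkp))

theorem add_two_lt_originCharge_erase [DecidableEq ι] {s : Finset ι} {v : ι → K} {k p : ι}
    (hp : p ∈ s) (hp0 : 0 < v p) (hpk : v p < v k) :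
    originCharge s v k + 2 < originCharge (s.erase p) v k := by
  rw [originCharge_erase hp (ne_of_apply_ne v hpk.ne), add_lt_add_iff_left,
    lt_div_iff₀ (sub_pos.2 hpk)]
  linarith

theorem lt_of_originCharge_lt [LinearOrder ι] {s : Finset ι} {a b : ι → K}
    (ha : StrictMonoOn a s) (hb : StrictMonoOn b s) (hb0 : ∀ k ∈ s, 0 < b k)
    (hab : ∀ k ∈ s, originCharge s a k < originCharge s b k) {i : ι} (hi : i ∈ s) :
    a i < b i := by
  obtain ⟨k, hk, hmax⟩ := s.exists_max_image (fun j => a j / b j) ⟨i, hi⟩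
  have hterm : ∀ j ∈ s.erase k, 2 * a k / (a k - a j) ≤ 2 * b k / (b k - b j) := by
    intro j hj
    obtain ⟨hjk, hj⟩ := mem_erase.1 hj
    have hcross : a j * b k ≤ a k * b j := (div_le_div_iff₀ (hb0 j hj) (hb0 k hk)).1 (hmax j hj)
    have hsub : 0 < (a k - a j) * (b k - b j) := by
      rcases hjk.lt_or_gt with h | h
      · exact mul_pos (sub_pos.2 (ha hj hk h)) (sub_pos.2 (hb hj hk h))
      · exact mul_pos_of_neg_of_neg (sub_neg.2 (ha hk hj h)) (sub_neg.2 (hb hk hj h))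
    rw [← sub_nonneg, div_sub_div _ _ (right_ne_zero_of_mul hsub.ne')
      (left_ne_zero_of_mul hsub.ne')]
    exact div_nonneg (by linarith) (by linarith)
  have hk_lt : a k < b k := by
    have hcharge := hab k hk
    have hsum := sum_le_sum hterm
    rw [originCharge, originCharge] at hcharge
    linarith
  exact (div_lt_one (hb0 i hi)).1 ((hmax i hi).trans_lt ((div_lt_one (hb0 k hk)).2 hk_lt))

end LinearOrderedField

open Polynomial in
/-- The Laguerre polynomial `L_n^α` as a formal polynomial, so that its derivatives and its degree
are available. -/
noncomputable def laguerrePoly (α : ℝ) (n : ℕ) : ℝ[X] :=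
  ∑ k ∈ range (n + 1),
    C ((-1 : ℝ) ^ k * (∏ i ∈ range (n - k), (α + k + 1 + i)) /
      ((Nat.factorial (n - k) : ℝ) * (Nat.factorial k : ℝ))) * X ^ k

namespace laguerrePoly

open Polynomial

theorem eval_eq_laguerre (α : ℝ) (n : ℕ) (x : ℝ) :
    (laguerrePoly α n).eval x = laguerre α n x := by
  simp [laguerrePoly, laguerre, eval_finsetSum]

theorem coeff_eq (α : ℝ) (n k : ℕ) : (laguerrePoly α n).coeff k =
    if k ≤ n then (-1 : ℝ) ^ k * (∏ i ∈ range (n - k), (α + k + 1 + i)) /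
      ((Nat.factorial (n - k) : ℝ) * (Nat.factorial k : ℝ)) else 0 := by
  simp only [laguerrePoly, finsetSum_coeff, coeff_C_mul, coeff_X_pow, mul_ite, mul_one, mul_zero,
    sum_ite_eq, mem_range, Nat.lt_succ_iff]

theorem coeff_eq_zero {α : ℝ} {n k : ℕ} (h : n < k) : (laguerrePoly α n).coeff k = 0 := by
  rw [coeff_eq, if_neg h.not_ge]

theorem natDegree_le (α : ℝ) (n : ℕ) : (laguerrePoly α n).natDegree ≤ n :=
  natDegree_le_iff_coeff_eq_zero.2 fun _ => coeff_eq_zero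

protected theorem ne_zero (α : ℝ) (n : ℕ) : laguerrePoly α n ≠ 0 := by
  have hcoeff : (laguerrePoly α n).coeff n ≠ 0 := by simp [coeff_eq, Nat.factorial_ne_zero]
  exact fun h => hcoeff (by rw [h, coeff_zero])

theorem coeff_add_one (α : ℝ) (n k : ℕ) :
    ((k : ℝ) + 1) * (α + k + 1) * (laguerrePoly α n).coeff (k + 1) =
      (k - n) * (laguerrePoly α n).coeff k := by
  rcases lt_trichotomy k n with h | rfl | h
  · obtain ⟨m, rfl⟩ := Nat.exists_eq_add_of_lt h
    have hprod : ∏ i ∈ range (m + 1), (α + k + 1 + (i : ℝ)) =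
        (∏ i ∈ range m, (α + (k + 1 : ℕ) + 1 + i)) * (α + k + 1) := by
      rw [prod_range_succ', Nat.cast_zero, add_zero]
      exact congrArg (· * _) (prod_congr rfl fun i _ => by push_cast; ring)
    rw [coeff_eq, coeff_eq, if_pos (by omega), if_pos (by omega),
      show k + m + 1 - (k + 1) = m by omega, show k + m + 1 - k = m + 1 by omega, hprod,
      Nat.factorial_succ, Nat.factorial_succ]
    push_cast
    field_simp
    ring
  · simp [coeff_eq_zero]
  · simp [coeff_eq_zero h, coeff_eq_zero (h.trans k.lt_succ_self)]

theorem kummer_equation (α : ℝ) (n : ℕ) :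
    X * derivative (derivative (laguerrePoly α n)) +
      (C (α + 1) - X) * derivative (laguerrePoly α n) = C (-n : ℝ) * laguerrePoly α n := by
  ext k
  have hrec := coeff_add_one α n k
  rcases k with _ | k
  · simp only [sub_mul, coeff_add, coeff_sub, coeff_C_mul, coeff_X_mul_zero, coeff_derivative]
    push_cast at hrec ⊢
    linarith
  · simp only [sub_mul, coeff_add, coeff_sub, coeff_C_mul, coeff_X_mul, coeff_derivative]
    push_cast at hrec ⊢
    linarith

end laguerrePoly

theorem originCharge_eq_of_laguerre_eq_zero {ι : Type*} [DecidableEq ι] {s : Finset ι}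
    {v : ι → ℝ} {α : ℝ} (hv : Set.InjOn v s) (hzero : ∀ i ∈ s, laguerre α #s (v i) = 0)
    {k : ι} (hk : k ∈ s) : originCharge s v k = α + 1 :=
  originCharge_eq_of_kummer_equation (laguerrePoly.kummer_equation α #s)
    (laguerrePoly.ne_zero α #s) (laguerrePoly.natDegree_le α #s) hv
    (fun i hi => (laguerrePoly.eval_eq_laguerre α #s (v i)).trans (hzero i hi)) hk

/-- The values `v 1 < ... < v n` are the zeros of `L_n^α`, all of them positive. Positivity is
imposed on `v 1` only, the smallest one. -/
structure IsLaguerreZeros (α : ℝ) (n : ℕ) (v : ℕ → ℝ) : Prop where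
  pos_one : 0 < v 1
  strictMonoOn : StrictMonoOn v (Set.Icc 1 n)
  eq_zero : ∀ k ∈ Set.Icc 1 n, laguerre α n (v k) = 0

namespace IsLaguerreZeros

variable {α β : ℝ} {n k : ℕ} {u v x y : ℕ → ℝ}

theorem strictMonoOn_coe_Icc (hv : IsLaguerreZeros α n v) :
    StrictMonoOn v (Icc 1 n : Finset ℕ) := by
  simpa only [coe_Icc] using hv.strictMonoOn

theorem pos (hv : IsLaguerreZeros α n v) (hk : k ∈ Icc 1 n) : 0 < v k := by
  obtain ⟨h1, hn⟩ := mem_Icc.1 hk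
  exact hv.pos_one.trans_le (hv.strictMonoOn.monotoneOn ⟨le_rfl, h1.trans hn⟩ ⟨h1, hn⟩ h1)

theorem originCharge_eq (hv : IsLaguerreZeros α n v) (hk : k ∈ Icc 1 n) :
    originCharge (Icc 1 n) v k = α + 1 :=
  originCharge_eq_of_laguerre_eq_zero hv.strictMonoOn_coe_Icc.injOn
    (by simpa using hv.eq_zero) hk

theorem lt_of_param_lt (hu : IsLaguerreZeros α n u) (hv : IsLaguerreZeros β n v) (hαβ : α < β)
    (hk : k ∈ Icc 1 n) : u k < v k :=
  lt_of_originCharge_lt hu.strictMonoOn_coe_Icc hv.strictMonoOn_coe_Icc (fun _ => hv.pos)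
    (fun j hj => by rw [hu.originCharge_eq hj, hv.originCharge_eq hj]; linarith) hk

theorem originCharge_Icc_lt (hx : IsLaguerreZeros α (n + 1) x) (hk : k ∈ Icc 1 n) :
    originCharge (Icc 1 n) x k < α + 1 := by
  have hk' : k ∈ Icc 1 (n + 1) := Icc_subset_Icc_right n.le_succ hk
  have hlast : n + 1 ∈ Icc 1 (n + 1) := by simp
  have herase : (Icc 1 (n + 1)).erase (n + 1) = Icc 1 n := by
    rw [Icc_erase_right, Ico_add_one_right_eq_Icc]
  rw [← hx.originCharge_eq hk', ← herase]
  exact originCharge_erase_lt hlast (hx.pos hk')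
    (hx.strictMonoOn_coe_Icc hk' hlast (Nat.lt_succ_of_le (mem_Icc.1 hk).2))

theorem lt_originCharge_Icc_succ (hx : IsLaguerreZeros α (n + 1) x) (hk : k ∈ Icc 1 n) :
    α + 3 < originCharge (Icc 1 n) (fun j => x (j + 1)) k := by
  obtain ⟨h1, hn⟩ := mem_Icc.1 hk
  have hk' : k + 1 ∈ Icc 1 (n + 1) := by simp [hn]
  have hfirst : 1 ∈ Icc 1 (n + 1) := by simp
  have herase : (Icc 1 (n + 1)).erase 1 = (Icc 1 n).map (addRightEmbedding 1) := by
    rw [Icc_erase_left, map_add_right_Icc, Icc_add_one_left_eq_Ioc]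
  calc α + 3 = originCharge (Icc 1 (n + 1)) x (k + 1) + 2 := by
        rw [hx.originCharge_eq hk']; ring
    _ < originCharge ((Icc 1 (n + 1)).erase 1) x (k + 1) :=
        add_two_lt_originCharge_erase hfirst hx.pos_one
          (hx.strictMonoOn_coe_Icc hfirst hk' (Nat.lt_succ_of_le h1))
    _ = originCharge (Icc 1 n) (fun j => x (j + 1)) k := by
        rw [herase]
        exact originCharge_map _ (addRightEmbedding 1) x k

theorem lt_of_degree_succ_of_param_le (hx : IsLaguerreZeros α (n + 1) x)
    (hy : IsLaguerreZeros β n y) (hαβ : α ≤ β) (hk : k ∈ Icc 1 n) : x k < y k := by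
  refine lt_of_originCharge_lt
    (hx.strictMonoOn_coe_Icc.mono (coe_subset.2 (Icc_subset_Icc_right n.le_succ)))
    hy.strictMonoOn_coe_Icc (fun _ => hy.pos) (fun j hj => ?_) hk
  rw [hy.originCharge_eq hj]
  linarith [hx.originCharge_Icc_lt hj]

theorem lt_succ_of_degree_succ_of_param_le (hy : IsLaguerreZeros β n y)
    (hx : IsLaguerreZeros α (n + 1) x) (hβα : β ≤ α + 2) (hk : k ∈ Icc 1 n) : y k < x (k + 1) := by
  have hsucc : ∀ j ∈ Icc 1 n, j + 1 ∈ Icc 1 (n + 1) := by simp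
  refine lt_of_originCharge_lt (b := fun j => x (j + 1)) hy.strictMonoOn_coe_Icc
    (fun i hi j hj hij => hx.strictMonoOn_coe_Icc (hsucc i hi) (hsucc j hj) (by lia))
    (fun j hj => hx.pos (hsucc j hj)) (fun j hj => ?_) hk
  rw [hy.originCharge_eq hj]
  linarith [hx.lt_originCharge_Icc_succ hj]

end IsLaguerreZeros

theorem zeros_chain_inequalities (α t : ℝ) (hα : α > -1) (ht0 : 0 < t) (ht2 : t < 2)
    (n : ℕ) (hn : 2 ≤ n) (x y τ X : ℕ → ℝ)
    (hx0 : 0 < x 1)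
    (hxmono : StrictMonoOn x (Set.Icc 1 n))
    (hxzero : ∀ k ∈ Set.Icc 1 n, laguerre α n (x k) = 0)
    (hy0 : 0 < y 1)
    (hymono : StrictMonoOn y (Set.Icc 1 (n - 1)))
    (hyzero : ∀ k ∈ Set.Icc 1 (n - 1), laguerre α (n - 1) (y k) = 0)
    (hτ0 : 0 < τ 1)
    (hτmono : StrictMonoOn τ (Set.Icc 1 (n - 1)))
    (hτzero : ∀ k ∈ Set.Icc 1 (n - 1), laguerre (α + t) (n - 1) (τ k) = 0)
    (hX0 : 0 < X 1)
    (hXmono : StrictMonoOn X (Set.Icc 1 (n - 1)))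
    (hXzero : ∀ k ∈ Set.Icc 1 (n - 1), laguerre (α + 2) (n - 1) (X k) = 0) :
    ∀ k, 1 ≤ k → k ≤ n - 1 →
      x k < y k ∧ y k < τ k ∧ τ k < X k ∧ X k < x (k + 1) := by
  obtain ⟨m, rfl⟩ : ∃ m, n = m + 1 := ⟨n - 1, by omega⟩
  have hx : IsLaguerreZeros α (m + 1) x := ⟨hx0, hxmono, hxzero⟩
  have hy : IsLaguerreZeros α m y := ⟨hy0, hymono, hyzero⟩
  have hτ : IsLaguerreZeros (α + t) m τ := ⟨hτ0, hτmono, hτzero⟩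
  have hX : IsLaguerreZeros (α + 2) m X := ⟨hX0, hXmono, hXzero⟩
  intro k hk1 hkm
  have hk : k ∈ Icc 1 m := mem_Icc.2 ⟨hk1, hkm⟩
  exact ⟨hx.lt_of_degree_succ_of_param_le hy le_rfl hk, hy.lt_of_param_lt hτ (by linarith) hk,
    hτ.lt_of_param_lt hX (by linarith) hk, hX.lt_succ_of_degree_succ_of_param_le hx le_rfl hk⟩
end
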